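/- arXiv:2603.10280 — 10 statements merged into one kernel-verified Lean document; each statement's English description precedes it below -/
import Mathlib

section
/- For every probability vector p ∈ ℝ^N, the penalized expected cost satisfies Σ_{i=1}^N p^i c_i − γ D(p, p0) ≤ E_{p0}[c] + (1/(4γ)) Var_{p0}[c]. In other words, the mean–variance objective under the reference distribution is an upper bound for the worst-case expected cost with the distributional distance penalty, uniformly over all probability vectors p. -/
/-!
Since `p` and `p0` both have total mass one, the cost may be centred at `m = E_{p0}[c]`.
With `x = p i / p0 i - 1` and `y = c i - m`, the inequality `x y ≤ γ x² + y² / (4γ)` holds at each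
index, being the nonnegativity of `(2γx - y)² / (4γ)`. Weighting by `p0 i` and summing gives the
bound, the last term becoming the variance.
-/

open Finset

/-- For every probability vector `p`, the penalized expected cost
`∑ i, p i * c i - γ * D(p, p0)` is bounded above by the mean–variance objective
`E_{p0}[c] + (1/(4γ)) Var_{p0}[c]` under the reference distribution `p0`. -/
theorem penalized_expectation_le_mean_variance
    (N : ℕ) (hN : 1 ≤ N) (γ : ℝ) (hγ : 0 < γ)
    (p0 : Fin N → ℝ) (hp0pos : ∀ i, 0 < p0 i) (hp0sum : ∑ i, p0 i = 1)
    (c : Fin N → ℝ)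
    (p : Fin N → ℝ) (hp : ∀ i, 0 ≤ p i) (hpsum : ∑ i, p i = 1) :
    (∑ i, p i * c i) - γ * (∑ i, p0 i * (1 - p i / p0 i) ^ 2) ≤
      (∑ i, p0 i * c i) +
        (1 / (4 * γ)) * ((∑ i, p0 i * (c i) ^ 2) - (∑ i, p0 i * c i) ^ 2) := by
  set m := ∑ i, p0 i * c i with hm
  -- Young's inequality at each index, with `x = p i / p0 i - 1` and `y = c i - m`:
  -- `x * y ≤ γ * x ^ 2 + y ^ 2 / (4 * γ)`.
  have key : ∀ i, p i * (c i - m) - γ * (p0 i * (1 - p i / p0 i) ^ 2) ≤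
      p0 i * (c i - m) + 1 / (4 * γ) * (p0 i * (c i - m) ^ 2) := by
    intro i
    have h0 := hp0pos i
    obtain ⟨r, hr⟩ : ∃ r, r = p i / p0 i := ⟨_, rfl⟩
    have hpr : p i = p0 i * r := by rw [hr]; field_simp
    rw [← hr, hpr]
    have hsq : 0 ≤ p0 i * ((2 * γ * (r - 1) - (c i - m)) ^ 2 / (4 * γ)) := by positivity
    have hid : p0 i * ((2 * γ * (r - 1) - (c i - m)) ^ 2 / (4 * γ)) =
        p0 i * (c i - m) + 1 / (4 * γ) * (p0 i * (c i - m) ^ 2)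
          - (p0 i * r * (c i - m) - γ * (p0 i * (1 - r) ^ 2)) := by
      field_simp
      ring
    linarith
  have hsum := Finset.sum_le_sum fun i (_ : i ∈ Finset.univ) => key i
  rw [Finset.sum_sub_distrib, Finset.sum_add_distrib, ← Finset.mul_sum, ← Finset.mul_sum] at hsum
  have h1 : ∑ i, p i * (c i - m) = ∑ i, p i * c i - m := by
    simp only [mul_sub, Finset.sum_sub_distrib, ← Finset.sum_mul, hpsum, one_mul]
  have h2 : ∑ i, p0 i * (c i - m) = 0 := by
    simp only [mul_sub, Finset.sum_sub_distrib, ← Finset.sum_mul, hp0sum, one_mul, ← hm, sub_self]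
  have h3 : ∑ i, p0 i * (c i - m) ^ 2 = ∑ i, p0 i * c i ^ 2 - m ^ 2 := by
    have h : ∀ i, p0 i * (c i - m) ^ 2 =
        p0 i * c i ^ 2 - p0 i * c i * (2 * m) + p0 i * m ^ 2 := fun i => by ring
    simp only [h, Finset.sum_add_distrib, Finset.sum_sub_distrib, ← Finset.sum_mul, hp0sum, ← hm]
    ring
  rw [h1, h2, h3] at hsum
  linarith
end

section
/- The vector p* defined by p*^i = p0^i (c_i + 2γ − E_{p0}[c])/(2γ) satisfies the exact identity Σ_{i=1}^N p*^i c_i − γ D(p*, p0) = E_{p0}[c] + (1/(4γ)) Var_{p0}[c]; that is, this candidate worst-case distribution attains the mean–variance value of the penalized objective. -/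
open Finset

/-- The candidate worst-case distribution
`p* i = p0 i * (c i + 2γ - E_{p0}[c]) / (2γ)` attains the mean–variance value of
the penalized objective:
`∑ i, p* i * c i - γ * D(p*, p0) = E_{p0}[c] + (1/(4γ)) Var_{p0}[c]`. -/
theorem worst_case_candidate_attains_mean_variance
    (N : ℕ) (hN : 1 ≤ N) (γ : ℝ) (hγ : 0 < γ)
    (p0 : Fin N → ℝ) (hp0pos : ∀ i, 0 < p0 i) (hp0sum : ∑ i, p0 i = 1)
    (c : Fin N → ℝ)
    (pstar : Fin N → ℝ)
    (hpstar : ∀ i, pstar i = p0 i * (c i + 2 * γ - (∑ j, p0 j * c j)) / (2 * γ)) :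
    (∑ i, pstar i * c i) - γ * (∑ i, p0 i * (1 - pstar i / p0 i) ^ 2) =
      (∑ i, p0 i * c i) +
        (1 / (4 * γ)) * ((∑ i, p0 i * (c i) ^ 2) - (∑ i, p0 i * c i) ^ 2) := by
  set m := ∑ j, p0 j * c j with hm
  -- `p*/p0 - 1 = (c - m)/(2γ)`, so each summand of the objective collapses through
  -- `c (c - m)/(2γ) - (c - m)²/(4γ) = (c² - m²)/(4γ)`.
  have hterm : ∀ i, pstar i * c i - γ * (p0 i * (1 - pstar i / p0 i) ^ 2) =
      p0 i * c i + (1 / (4 * γ)) * (p0 i * (c i) ^ 2) - m ^ 2 / (4 * γ) * p0 i := by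
    intro i
    have hp := (hp0pos i).ne'
    rw [hpstar i]
    field_simp
    ring
  rw [mul_sum, ← sum_sub_distrib, sum_congr rfl fun i _ => hterm i, sum_sub_distrib,
    sum_add_distrib, ← mul_sum, ← mul_sum, hp0sum, ← hm]
  ring
end

section
/- If min_{i} c_i − E_{p0}[c] + 2γ > 0, then the supremum over all probability vectors p of Σ_{i=1}^N p^i c_i − γ D(p, p0) equals E_{p0}[c] + (1/(4γ)) Var_{p0}[c], and this supremum is attained (in particular at p*^i = p0^i (c_i + 2γ − E_{p0}[c])/(2γ)). -/
/-!
Completing the square in `p` shows that, for every `p` summing to `1`, the penalized objective is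
the claimed value minus `γ * ∑ i, p0 i * ((p i - p* i) / p0 i) ^ 2`
(`penalized_objective_eq_sub_sq`). The upper bound and the value at `p*` are both immediate; the
assumption on `min_i c i` makes `p*` nonnegative, hence admissible.
-/

open Finset

/-- Completed square. The term `c i + 2γ - E_{p0}[c]` over `2γ` is the density of `p*` with respect
to `p0`. -/
lemma penalized_objective_eq_sub_sq {N : ℕ} {γ : ℝ} (hγ : 0 < γ)
    {p0 : Fin N → ℝ} (hp0pos : ∀ i, 0 < p0 i) (hp0sum : ∑ i, p0 i = 1)
    (c p : Fin N → ℝ) (hp : ∑ i, p i = 1) :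
    (∑ i, p i * c i) - γ * (∑ i, p0 i * (1 - p i / p0 i) ^ 2) =
      (∑ i, p0 i * c i) +
        (1 / (4 * γ)) * ((∑ i, p0 i * (c i) ^ 2) - (∑ i, p0 i * c i) ^ 2) -
      γ * ∑ i, p0 i * (p i / p0 i - (c i + 2 * γ - ∑ j, p0 j * c j) / (2 * γ)) ^ 2 := by
  obtain ⟨m, hm⟩ : ∃ m, m = ∑ j, p0 j * c j := ⟨_, rfl⟩
  have pointwise : ∀ i, p i * c i - γ * (p0 i * (1 - p i / p0 i) ^ 2) =
      m * p i + (p0 i * c i - m * p0 i) +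
        (1 / (4 * γ)) * (p0 i * (c i) ^ 2 - 2 * m * (p0 i * c i) + m ^ 2 * p0 i) -
      γ * (p0 i * (p i / p0 i - (c i + 2 * γ - m) / (2 * γ)) ^ 2) := by
    intro i
    have := (hp0pos i).ne'
    field_simp
    ring
  have total := Finset.sum_congr (rfl : (Finset.univ : Finset (Fin N)) = _)
    fun i _ => pointwise i
  simp only [Finset.sum_sub_distrib, Finset.sum_add_distrib, ← Finset.mul_sum, hp, hp0sum,
    ← hm] at total
  rw [← hm, total]
  ring

/-- If `min_i c i - E_{p0}[c] + 2γ > 0`, then the supremum over all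
probability vectors `p` of `∑ i, p i * c i - γ * D(p, p0)` equals
`E_{p0}[c] + (1/(4γ)) Var_{p0}[c]`, and it is attained, in particular at
`p* i = p0 i * (c i + 2γ - E_{p0}[c]) / (2γ)`. -/
theorem penalized_worst_case_isGreatest_mean_variance
    (N : ℕ) (hN : 1 ≤ N) (γ : ℝ) (hγ : 0 < γ)
    (p0 : Fin N → ℝ) (hp0pos : ∀ i, 0 < p0 i) (hp0sum : ∑ i, p0 i = 1)
    (c : Fin N → ℝ)
    (hmin : ∀ i, 0 < c i - (∑ j, p0 j * c j) + 2 * γ)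
    (pstar : Fin N → ℝ)
    (hpstar : ∀ i, pstar i = p0 i * (c i + 2 * γ - (∑ j, p0 j * c j)) / (2 * γ)) :
    IsGreatest
      {v : ℝ | ∃ p : Fin N → ℝ, (∀ i, 0 ≤ p i) ∧ (∑ i, p i) = 1 ∧
        v = (∑ i, p i * c i) - γ * (∑ i, p0 i * (1 - p i / p0 i) ^ 2)}
      ((∑ i, p0 i * c i) +
        (1 / (4 * γ)) * ((∑ i, p0 i * (c i) ^ 2) - (∑ i, p0 i * c i) ^ 2)) ∧
    (∑ i, pstar i * c i) - γ * (∑ i, p0 i * (1 - pstar i / p0 i) ^ 2) =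
      (∑ i, p0 i * c i) +
        (1 / (4 * γ)) * ((∑ i, p0 i * (c i) ^ 2) - (∑ i, p0 i * c i) ^ 2) := by
  have value : (∑ i, pstar i * c i) - γ * (∑ i, p0 i * (1 - pstar i / p0 i) ^ 2) =
      (∑ i, p0 i * c i) +
        (1 / (4 * γ)) * ((∑ i, p0 i * (c i) ^ 2) - (∑ i, p0 i * c i) ^ 2) ∧
      ∑ i, pstar i = 1 := by
    have hsum : ∑ i, pstar i = 1 := by
      have split : ∀ i, pstar i =
          (1 / (2 * γ)) * (p0 i * c i + (2 * γ - ∑ j, p0 j * c j) * p0 i) := by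
        intro i
        rw [hpstar i]
        ring
      rw [Finset.sum_congr rfl fun i _ => split i, ← Finset.mul_sum, Finset.sum_add_distrib,
        ← Finset.mul_sum, hp0sum]
      field_simp
      ring
    refine ⟨?_, hsum⟩
    rw [penalized_objective_eq_sub_sq hγ hp0pos hp0sum c pstar hsum]
    have zero : ∀ i, p0 i *
        (pstar i / p0 i - (c i + 2 * γ - ∑ j, p0 j * c j) / (2 * γ)) ^ 2 = 0 := by
      intro i
      have := (hp0pos i).ne'
      rw [hpstar i, mul_div_assoc, mul_div_cancel_left₀ _ this]
      ring
    rw [Finset.sum_congr rfl fun i _ => zero i]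
    simp
  obtain ⟨hval, hsum⟩ := value
  refine ⟨⟨⟨pstar, fun i => ?_, hsum, hval.symm⟩, ?_⟩, hval⟩
  · rw [hpstar i]
    have h1 := hp0pos i
    have h2 : 0 < c i + 2 * γ - ∑ j, p0 j * c j := by linarith [hmin i]
    positivity
  · rintro v ⟨p, -, hp, rfl⟩
    rw [penalized_objective_eq_sub_sq hγ hp0pos hp0sum c p hp]
    exact sub_le_self _ (mul_nonneg hγ.le
      (Finset.sum_nonneg fun i _ => mul_nonneg (hp0pos i).le (sq_nonneg _)))
end

section
/- For every s ∈ ℝ, the supremum over all p ∈ [0, ∞)^N of the Lagrangian Σ_{i=1}^N ( p^i c_i − γ p0^i (1 − p^i/p0^i)² ) + s (1 − Σ_{i=1}^N p^i) is finite and equals γ Σ_{i=1}^N p0^i (max{(c_i + 2γ − s)/(2γ), 0})² − γ + s, and it is attained at the point p with coordinates p^i = (p0^i/(2γ)) max{c_i + 2γ − s, 0}. -/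
/-!
With `x i = p i / p0 i` and `t i = (c i + 2γ - s) / (2γ)`, expanding and using `∑ i, p0 i = 1` turns the
Lagrangian into `γ ∑ i, p0 i * (2 * t i * x i - x i ^ 2) - γ + s` (`lagrangian_eq_separated`).
For `x ≥ 0` each summand `2 * t * x - x ^ 2` is at most `(max t 0) ^ 2`, with equality at
`x = max t 0`, which is the point `p i = p0 i * max (t i) 0` of the statement.
-/

open Finset

theorem lagrangian_eq_separated {N : ℕ} {γ : ℝ} (hγ : 0 < γ)
    {p0 : Fin N → ℝ} (hp0pos : ∀ i, 0 < p0 i) (hp0sum : ∑ i, p0 i = 1)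
    (c : Fin N → ℝ) (s : ℝ) (p : Fin N → ℝ) :
    (∑ i, (p i * c i - γ * p0 i * (1 - p i / p0 i) ^ 2)) + s * (1 - ∑ i, p i) =
      γ * (∑ i, p0 i * (2 * ((c i + 2 * γ - s) / (2 * γ)) * (p i / p0 i) - (p i / p0 i) ^ 2))
        - γ + s := by
  have hterm : ∀ i, p i * c i - γ * p0 i * (1 - p i / p0 i) ^ 2 =
      γ * (p0 i * (2 * ((c i + 2 * γ - s) / (2 * γ)) * (p i / p0 i) - (p i / p0 i) ^ 2))
        - γ * p0 i + s * p i := by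
    intro i
    have := (hp0pos i).ne'
    field_simp
    ring
  rw [Finset.sum_congr rfl fun i _ => hterm i, Finset.sum_add_distrib, Finset.sum_sub_distrib,
    ← Finset.mul_sum, ← Finset.mul_sum, ← Finset.mul_sum, hp0sum]
  ring

theorem two_mul_sub_sq_le_max_sq (t : ℝ) {x : ℝ} (hx : 0 ≤ x) :
    2 * t * x - x ^ 2 ≤ (max t 0) ^ 2 := by
  nlinarith [sq_nonneg (max t 0 - x), mul_le_mul_of_nonneg_right (le_max_left t 0) hx]

theorem two_mul_max_sub_sq_eq (t : ℝ) :
    2 * t * max t 0 - (max t 0) ^ 2 = (max t 0) ^ 2 := by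
  rcases max_cases t 0 with ⟨h, _⟩ | ⟨h, _⟩ <;> rw [h] <;> ring

/-- For every Lagrange multiplier `s ∈ ℝ`, the supremum over
`p ∈ [0,∞)^N` of the Lagrangian
`∑ i, (p i * c i - γ p0 i (1 - p i / p0 i)²) + s (1 - ∑ i, p i)`
is finite and equals `γ ∑ i, p0 i * ((c i + 2γ - s)/(2γ))⁺² - γ + s`,
attained at `p i = (p0 i / (2γ)) * (c i + 2γ - s)⁺`. -/
theorem lagrangian_sup_over_nonneg_orthant
    (N : ℕ) (hN : 1 ≤ N) (γ : ℝ) (hγ : 0 < γ)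
    (p0 : Fin N → ℝ) (hp0pos : ∀ i, 0 < p0 i) (hp0sum : ∑ i, p0 i = 1)
    (c : Fin N → ℝ) (s : ℝ) :
    (∀ p : Fin N → ℝ, (∀ i, 0 ≤ p i) →
      (∑ i, (p i * c i - γ * p0 i * (1 - p i / p0 i) ^ 2)) + s * (1 - ∑ i, p i) ≤
        γ * (∑ i, p0 i * (max ((c i + 2 * γ - s) / (2 * γ)) 0) ^ 2) - γ + s) ∧
    (∀ i, 0 ≤ (p0 i / (2 * γ)) * max (c i + 2 * γ - s) 0) ∧
    (∑ i, (((p0 i / (2 * γ)) * max (c i + 2 * γ - s) 0) * c i -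
        γ * p0 i * (1 - ((p0 i / (2 * γ)) * max (c i + 2 * γ - s) 0) / p0 i) ^ 2)) +
        s * (1 - ∑ i, (p0 i / (2 * γ)) * max (c i + 2 * γ - s) 0) =
      γ * (∑ i, p0 i * (max ((c i + 2 * γ - s) / (2 * γ)) 0) ^ 2) - γ + s := by
  refine ⟨fun p hp => ?_, fun i => ?_, ?_⟩
  · rw [lagrangian_eq_separated hγ hp0pos hp0sum]
    gcongr with i
    · exact (hp0pos i).le
    · exact two_mul_sub_sq_le_max_sq _ (div_nonneg (hp i) (hp0pos i).le)
  · have := hp0pos i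
    positivity
  · have hx : ∀ i, p0 i / (2 * γ) * max (c i + 2 * γ - s) 0 / p0 i =
        max ((c i + 2 * γ - s) / (2 * γ)) 0 := by
      intro i
      have := (hp0pos i).ne'
      have hmax : max ((c i + 2 * γ - s) / (2 * γ)) 0 = max (c i + 2 * γ - s) 0 / (2 * γ) := by
        rw [← max_div_div_right (by positivity), zero_div]
      rw [hmax]
      field_simp
    rw [lagrangian_eq_separated hγ hp0pos hp0sum c s
      fun i => p0 i / (2 * γ) * max (c i + 2 * γ - s) 0]
    simp only [hx, two_mul_max_sub_sq_eq]
end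

section
/- Strong duality holds for the penalized worst-case problem: the supremum over all probability vectors p of Σ_{i=1}^N p^i c_i − γ D(p, p0) equals the infimum over s ∈ ℝ of γ Σ_{i=1}^N p0^i (max{(c_i + 2γ − s)/(2γ), 0})² − γ + s. -/
open Finset

/-!
Write `a i = (c i + 2γ - s) / (2γ)` and `t i = p i / p0 i`. The Lagrangian separates over the
coordinates, and each term is controlled by `2 t a - t² ≤ (a⁺)²` for `t ≥ 0`, with equality at
`t = a⁺`. Summing gives weak duality (`primal_le_dual`). The map `s ↦ ∑ i, p0 i * (a i)⁺` is
continuous, at least `1` for `s ≪ 0` and at most `1` for `s ≫ 0`, so it equals `1` at some `s`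
(`exists_multiplier`). For that `s`, the vector `p i = p0 i * (a i)⁺` is a probability vector at
which the two objectives coincide (`primal_eq_dual`), so both optima are attained and are equal.
-/

/-- Completing the square in one coordinate: the primal term is the Lagrangian dual term minus
`γ q` times the gap `(a⁺)² - 2 t a + t²`, where `t = x / q` and `a = (c + 2γ - s) / (2γ)`. -/
lemma term_identity {γ q x c s : ℝ} (hγ : 0 < γ) (hq : 0 < q) :
    x * c - γ * (q * (1 - x / q) ^ 2) =
      γ * (q * (max ((c + 2 * γ - s) / (2 * γ)) 0) ^ 2) - γ * q + s * x
        - γ * q * ((max ((c + 2 * γ - s) / (2 * γ)) 0) ^ 2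
          - 2 * (x / q) * ((c + 2 * γ - s) / (2 * γ)) + (x / q) ^ 2) := by
  generalize max ((c + 2 * γ - s) / (2 * γ)) 0 = m
  field_simp
  ring

lemma gap_nonneg (t a : ℝ) (ht : 0 ≤ t) :
    0 ≤ (max a 0) ^ 2 - 2 * t * a + t ^ 2 := by
  nlinarith [sq_nonneg (max a 0 - t), mul_le_mul_of_nonneg_left (le_max_left a 0) ht]

lemma gap_eq_zero (a : ℝ) :
    (max a 0) ^ 2 - 2 * (max a 0) * a + (max a 0) ^ 2 = 0 := by
  rcases le_total a 0 with h | h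
  · simp [max_eq_right h]
  · rw [max_eq_left h]; ring

/-- For `p` and `p0` of total mass one, the coordinatewise Lagrangian terms sum to the dual
objective at `s`, where `m i` stands for the positive part `(a i)⁺`. -/
lemma sum_dual_terms {N : ℕ} {γ : ℝ} {p0 p m : Fin N → ℝ} (s : ℝ)
    (hp0sum : ∑ i, p0 i = 1) (hp : ∑ i, p i = 1) :
    ∑ i, (γ * (p0 i * (m i) ^ 2) - γ * p0 i + s * p i) =
      γ * (∑ i, p0 i * (m i) ^ 2) - γ + s := by
  rw [Finset.sum_add_distrib, Finset.sum_sub_distrib, ← Finset.mul_sum, ← Finset.mul_sum,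
    ← Finset.mul_sum, hp0sum, hp, mul_one, mul_one]

lemma primal_le_dual {N : ℕ} {γ : ℝ} (hγ : 0 < γ) {p0 : Fin N → ℝ}
    (hp0pos : ∀ i, 0 < p0 i) (hp0sum : ∑ i, p0 i = 1) (c : Fin N → ℝ) {p : Fin N → ℝ}
    (hp : ∀ i, 0 ≤ p i) (hpsum : ∑ i, p i = 1) (s : ℝ) :
    (∑ i, p i * c i) - γ * (∑ i, p0 i * (1 - p i / p0 i) ^ 2) ≤
      γ * (∑ i, p0 i * (max ((c i + 2 * γ - s) / (2 * γ)) 0) ^ 2) - γ + s := by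
  rw [← sum_dual_terms s hp0sum hpsum, Finset.mul_sum, ← Finset.sum_sub_distrib]
  refine Finset.sum_le_sum fun i _ => ?_
  rw [term_identity (s := s) hγ (hp0pos i)]
  have h := gap_nonneg (p i / p0 i) ((c i + 2 * γ - s) / (2 * γ))
    (div_nonneg (hp i) (hp0pos i).le)
  have h' := mul_nonneg (mul_pos hγ (hp0pos i)).le h
  linarith

lemma primal_eq_dual {N : ℕ} {γ : ℝ} (hγ : 0 < γ) {p0 : Fin N → ℝ}
    (hp0pos : ∀ i, 0 < p0 i) (hp0sum : ∑ i, p0 i = 1) (c : Fin N → ℝ) {p : Fin N → ℝ} {s : ℝ}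
    (hp : ∀ i, p i = p0 i * max ((c i + 2 * γ - s) / (2 * γ)) 0) (hpsum : ∑ i, p i = 1) :
    (∑ i, p i * c i) - γ * (∑ i, p0 i * (1 - p i / p0 i) ^ 2) =
      γ * (∑ i, p0 i * (max ((c i + 2 * γ - s) / (2 * γ)) 0) ^ 2) - γ + s := by
  rw [← sum_dual_terms s hp0sum hpsum, Finset.mul_sum, ← Finset.sum_sub_distrib]
  refine Finset.sum_congr rfl fun i _ => ?_
  have ht : p i / p0 i = max ((c i + 2 * γ - s) / (2 * γ)) 0 := by
    rw [hp i, mul_div_cancel_left₀ _ (hp0pos i).ne']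
  rw [term_identity (s := s) hγ (hp0pos i), ht, gap_eq_zero]
  ring

lemma exists_multiplier {N : ℕ} {γ : ℝ} (hγ : 0 < γ) {p0 : Fin N → ℝ}
    (hp0pos : ∀ i, 0 < p0 i) (hp0sum : ∑ i, p0 i = 1) (c : Fin N → ℝ) :
    ∃ s : ℝ, ∑ i, p0 i * max ((c i + 2 * γ - s) / (2 * γ)) 0 = 1 := by
  have hc : ∀ i, |c i| ≤ ∑ j, |c j| := fun i =>
    Finset.single_le_sum (f := fun j => |c j|) (fun j _ => abs_nonneg _) (Finset.mem_univ i)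
  have h2 : 0 < 2 * γ := by positivity
  have hcont : Continuous fun s : ℝ => ∑ i, p0 i * max ((c i + 2 * γ - s) / (2 * γ)) 0 := by
    fun_prop
  -- Beyond `± ∑ j, |c j|` the sign of `c i - s` is the same for all `i`, which places every
  -- `(c i + 2γ - s) / (2γ)` on one side of `1`.
  refine mem_range_of_exists_le_of_exists_ge hcont ⟨∑ j, |c j|, ?_⟩ ⟨-∑ j, |c j|, ?_⟩
  · rw [← hp0sum]
    refine Finset.sum_le_sum fun i _ => mul_le_of_le_one_right (hp0pos i).le ?_
    refine max_le ?_ zero_le_one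
    rw [div_le_one h2]
    linarith [le_abs_self (c i), hc i]
  · rw [← hp0sum]
    refine Finset.sum_le_sum fun i _ => le_mul_of_one_le_right (hp0pos i).le ?_
    refine le_max_of_le_left ?_
    rw [one_le_div h2]
    linarith [neg_abs_le (c i), hc i]


/-- Strong duality for the penalized worst-case problem: the
supremum over probability vectors `p` of `∑ i, p i * c i - γ D(p, p0)` equals
the infimum over `s ∈ ℝ` of the dual objective
`γ ∑ i, p0 i ((c i + 2γ - s)/(2γ))⁺² - γ + s`. -/
theorem penalized_worst_case_strong_duality
    (N : ℕ) (hN : 1 ≤ N) (γ : ℝ) (hγ : 0 < γ)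
    (p0 : Fin N → ℝ) (hp0pos : ∀ i, 0 < p0 i) (hp0sum : ∑ i, p0 i = 1)
    (c : Fin N → ℝ) :
    sSup {v : ℝ | ∃ p : Fin N → ℝ, (∀ i, 0 ≤ p i) ∧ (∑ i, p i) = 1 ∧
        v = (∑ i, p i * c i) - γ * (∑ i, p0 i * (1 - p i / p0 i) ^ 2)} =
      sInf {v : ℝ | ∃ s : ℝ,
        v = γ * (∑ i, p0 i * (max ((c i + 2 * γ - s) / (2 * γ)) 0) ^ 2) - γ + s} := by
  obtain ⟨s, hs⟩ := exists_multiplier hγ hp0pos hp0sum c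
  have heq := primal_eq_dual hγ hp0pos hp0sum c (s := s) (fun _ => rfl) hs
  have hnonneg : ∀ i, 0 ≤ p0 i * max ((c i + 2 * γ - s) / (2 * γ)) 0 := fun i =>
    mul_nonneg (hp0pos i).le (le_max_right _ _)
  -- Both optima are attained, with the dual objective at `s` as their common value.
  trans γ * (∑ i, p0 i * (max ((c i + 2 * γ - s) / (2 * γ)) 0) ^ 2) - γ + s
  · refine IsGreatest.csSup_eq ⟨⟨_, hnonneg, hs, heq.symm⟩, ?_⟩
    rintro v ⟨p, hp, hpsum, rfl⟩
    exact primal_le_dual hγ hp0pos hp0sum c hp hpsum s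
  · symm
    refine IsLeast.csInf_eq ⟨⟨s, rfl⟩, ?_⟩
    rintro v ⟨s', rfl⟩
    rw [← heq]
    exact primal_le_dual hγ hp0pos hp0sum c hnonneg hs s'
end

section
/- For every s ∈ ℝ, the relaxed dual objective satisfies the exact identity γ Σ_{i=1}^N p0^i ((c_i + 2γ − s)/(2γ))² − γ + s = E_{p0}[c] + (1/(4γ)) Var_{p0}[c] + (s − E_{p0}[c])²/(4γ). Consequently this function of s is uniquely minimized at s* = E_{p0}[c], with minimum value E_{p0}[c] + (1/(4γ)) Var_{p0}[c]. -/
open Finset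

/-! Expanding the square, the objective is a quadratic polynomial in `s` whose coefficients are
the first two moments of `c` under `p0` (using that `p0` has total mass one). Completing the square
gives the identity; its last term `(s - E[c])² / (4γ)` vanishes exactly at `s = E[c]` and is
positive elsewhere, which gives the unique minimizer. -/

/-- The relaxed dual objective satisfies, for every `s`,
`γ ∑ i, p0 i ((c i + 2γ - s)/(2γ))² - γ + s
  = E_{p0}[c] + (1/(4γ)) Var_{p0}[c] + (s - E_{p0}[c])²/(4γ)`;
consequently it is uniquely minimized at `s* = E_{p0}[c]`, with minimum value
`E_{p0}[c] + (1/(4γ)) Var_{p0}[c]`. -/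
theorem relaxed_dual_objective_identity_and_minimizer
    (N : ℕ) (hN : 1 ≤ N) (γ : ℝ) (hγ : 0 < γ)
    (p0 : Fin N → ℝ) (hp0pos : ∀ i, 0 < p0 i) (hp0sum : ∑ i, p0 i = 1)
    (c : Fin N → ℝ) :
    (∀ s : ℝ,
      γ * (∑ i, p0 i * ((c i + 2 * γ - s) / (2 * γ)) ^ 2) - γ + s =
        (∑ i, p0 i * c i) +
          (1 / (4 * γ)) * ((∑ i, p0 i * (c i) ^ 2) - (∑ i, p0 i * c i) ^ 2) +
          (s - (∑ i, p0 i * c i)) ^ 2 / (4 * γ)) ∧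
    (γ * (∑ i, p0 i * ((c i + 2 * γ - (∑ j, p0 j * c j)) / (2 * γ)) ^ 2) - γ +
        (∑ j, p0 j * c j) =
      (∑ i, p0 i * c i) +
        (1 / (4 * γ)) * ((∑ i, p0 i * (c i) ^ 2) - (∑ i, p0 i * c i) ^ 2)) ∧
    (∀ s : ℝ, s ≠ (∑ j, p0 j * c j) →
      (∑ i, p0 i * c i) +
          (1 / (4 * γ)) * ((∑ i, p0 i * (c i) ^ 2) - (∑ i, p0 i * c i) ^ 2) <
        γ * (∑ i, p0 i * ((c i + 2 * γ - s) / (2 * γ)) ^ 2) - γ + s) := by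
  have key : ∀ s : ℝ,
      γ * (∑ i, p0 i * ((c i + 2 * γ - s) / (2 * γ)) ^ 2) - γ + s =
        (∑ i, p0 i * c i) +
          (1 / (4 * γ)) * ((∑ i, p0 i * (c i) ^ 2) - (∑ i, p0 i * c i) ^ 2) +
          (s - (∑ i, p0 i * c i)) ^ 2 / (4 * γ) := by
    intro s
    -- Expanding the square leaves only the zeroth, first and second moments of `c` under `p0`.
    have hexp : ∑ i, p0 i * ((c i + 2 * γ - s) / (2 * γ)) ^ 2 =
        ((∑ i, p0 i * (c i) ^ 2) + 2 * (2 * γ - s) * (∑ i, p0 i * c i) +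
          (2 * γ - s) ^ 2 * ∑ i, p0 i) / (4 * γ ^ 2) := by
      rw [Finset.mul_sum, Finset.mul_sum, ← Finset.sum_add_distrib, ← Finset.sum_add_distrib,
        Finset.sum_div]
      refine Finset.sum_congr rfl fun i _ => ?_
      field_simp
      ring
    rw [hexp, hp0sum]
    field_simp
    ring
  refine ⟨key, ?_, fun s hs => ?_⟩
  · rw [key]
    simp
  · rw [key s]
    have hsq : 0 < (s - ∑ j, p0 j * c j) ^ 2 := sq_pos_of_ne_zero (sub_ne_zero.mpr hs)
    have : 0 < (s - ∑ j, p0 j * c j) ^ 2 / (4 * γ) := by positivity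
    linarith
end

section
/- One-step equivalence of the distributionally robust and mean–variance Bellman operators: let S and U be nonempty sets (states and controls), f : S × U × {1,...,N} → S the dynamics under each disturbance outcome, c : S × U → [0,∞) a stage cost, W : S → [0,∞) a candidate value function, and α ∈ (0,1) a discount factor. Assume that for every (x,u) ∈ S × U, min_i α W(f(x,u,i)) − Σ_i p0^i α W(f(x,u,i)) + 2γ > 0. Then for every x ∈ S, inf_{u∈U} [ c(x,u) + sup_{p probability vector} ( Σ_i p^i α W(f(x,u,i)) − γ D(p, p0) ) ] = inf_{u∈U} [ c(x,u) + α Σ_i p0^i W(f(x,u,i)) + (1/(4γ)) Var_{p0}[α W(f(x,u,·))] ]; moreover the two bracketed expressions are equal for each fixed (x,u). -/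
/-!
Write `g i = α * W (f x u i)`, `m = ∑ i, p0 i * g i` and `V` for the variance of `g` under `p0`.
Completing the square in the density `p i / p0 i` turns the penalized objective, for weights `p`
of total mass one, into
`m + V / (4γ) - γ * ∑ i, p0 i * (p i / p0 i - 1 - (g i - m) / (2γ)) ^ 2`
(`objective_eq_sub_sq`). It is therefore at most `m + V / (4γ)`, with equality at
`p i = p0 i * (1 + (g i - m) / (2γ))`. This `p` has mass one, and the gap condition says exactly
that its entries are positive, so the supremum is attained (`isGreatest_objective`). The equality
of the infima over controls follows from the pointwise equality.
-/

open Finset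

/-- Completion of the square in the density `p i / p0 i`. -/
lemma objective_eq_sub_sq {N : ℕ} {γ : ℝ} (hγ : 0 < γ) {p0 : Fin N → ℝ}
    (hp0pos : ∀ i, 0 < p0 i) (hp0sum : ∑ i, p0 i = 1) (g p : Fin N → ℝ)
    (hp : ∑ i, p i = 1) (m : ℝ) (hm : ∑ i, p0 i * g i = m) :
    (∑ i, p i * g i) - γ * (∑ i, p0 i * (1 - p i / p0 i) ^ 2) =
      m + (1 / (4 * γ)) * ((∑ i, p0 i * g i ^ 2) - m ^ 2) -
        γ * ∑ i, p0 i * (p i / p0 i - 1 - (g i - m) / (2 * γ)) ^ 2 := by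
  have key : ∀ i, p i * g i - γ * (p0 i * (1 - p i / p0 i) ^ 2) +
      γ * (p0 i * (p i / p0 i - 1 - (g i - m) / (2 * γ)) ^ 2) =
      p i * m + p0 i * g i - p0 i * m +
        (1 / (4 * γ)) * (p0 i * g i ^ 2 - p0 i * g i * (2 * m) + p0 i * m ^ 2) := by
    intro i
    have h0 := (hp0pos i).ne'
    field_simp
    ring
  have h := Finset.sum_congr (rfl : (Finset.univ : Finset (Fin N)) = _) fun i _ => key i
  simp only [Finset.sum_add_distrib, Finset.sum_sub_distrib, ← Finset.mul_sum,
    ← Finset.sum_mul, hp, hp0sum, hm] at h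
  linear_combination h

/-- The penalized worst-case expectation is attained, with the mean-variance value. -/
lemma isGreatest_objective {N : ℕ} {γ : ℝ} (hγ : 0 < γ) {p0 : Fin N → ℝ}
    (hp0pos : ∀ i, 0 < p0 i) (hp0sum : ∑ i, p0 i = 1) (g : Fin N → ℝ)
    (hgap : ∀ i, 0 < g i - (∑ j, p0 j * g j) + 2 * γ) :
    IsGreatest {v : ℝ | ∃ p : Fin N → ℝ, (∀ i, 0 ≤ p i) ∧ (∑ i, p i) = 1 ∧
        v = (∑ i, p i * g i) - γ * (∑ i, p0 i * (1 - p i / p0 i) ^ 2)}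
      ((∑ i, p0 i * g i) +
        (1 / (4 * γ)) * ((∑ i, p0 i * g i ^ 2) - (∑ i, p0 i * g i) ^ 2)) := by
  obtain ⟨m, hm⟩ : ∃ m, ∑ i, p0 i * g i = m := ⟨_, rfl⟩
  rw [hm] at hgap ⊢
  constructor
  · have hsum : ∑ i, p0 i * (1 + (g i - m) / (2 * γ)) = 1 := by
      have hterm : ∀ i, p0 i * (1 + (g i - m) / (2 * γ)) =
          p0 i + (p0 i * g i - p0 i * m) * (1 / (2 * γ)) := fun i => by ring
      simp only [hterm, Finset.sum_add_distrib, ← Finset.sum_mul, Finset.sum_sub_distrib,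
        hp0sum, hm]
      ring
    refine ⟨fun i => p0 i * (1 + (g i - m) / (2 * γ)), fun i => ?_, hsum, ?_⟩
    · have hpos : 1 + (g i - m) / (2 * γ) = (g i - m + 2 * γ) / (2 * γ) := by
        field_simp
        ring
      have hnum := hgap i
      have hp0i := hp0pos i
      simp only [hpos]
      positivity
    · rw [objective_eq_sub_sq hγ hp0pos hp0sum g _ hsum m hm]
      have hzero : ∀ i, p0 i * (1 + (g i - m) / (2 * γ)) / p0 i - 1 - (g i - m) / (2 * γ) = 0 := by
        intro i
        rw [mul_div_cancel_left₀ _ (hp0pos i).ne']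
        ring
      simp [hzero]
  · rintro v ⟨p, -, hp, rfl⟩
    rw [objective_eq_sub_sq hγ hp0pos hp0sum g p hp m hm]
    have hsq : 0 ≤ γ * ∑ i, p0 i * (p i / p0 i - 1 - (g i - m) / (2 * γ)) ^ 2 :=
      mul_nonneg hγ.le (Finset.sum_nonneg fun i _ => mul_nonneg (hp0pos i).le (sq_nonneg _))
    linarith

/-- One-step equivalence of the distributionally robust and
mean–variance Bellman operators. Under the condition
`min_i α W(f x u i) - ∑ i, p0 i * α W(f x u i) + 2γ > 0` for all `(x, u)`,
the robust Bellman right-hand side and the mean–variance Bellman right-hand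
side coincide, both pointwise in `(x, u)` and after minimizing over `u`. -/
theorem one_step_bellman_equivalence
    (N : ℕ) (hN : 1 ≤ N) (γ : ℝ) (hγ : 0 < γ)
    (p0 : Fin N → ℝ) (hp0pos : ∀ i, 0 < p0 i) (hp0sum : ∑ i, p0 i = 1)
    (S U : Type*) [Nonempty S] [Nonempty U]
    (f : S → U → Fin N → S)
    (c : S → U → ℝ) (hc : ∀ x u, 0 ≤ c x u)
    (W : S → ℝ) (hW : ∀ x, 0 ≤ W x)
    (α : ℝ) (hα : 0 < α) (hα1 : α < 1)
    (hgap : ∀ x u, ∀ i, 0 < α * W (f x u i) - (∑ j, p0 j * (α * W (f x u j))) + 2 * γ) :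
    (∀ x : S, ∀ u : U,
      c x u + sSup {v : ℝ | ∃ p : Fin N → ℝ, (∀ i, 0 ≤ p i) ∧ (∑ i, p i) = 1 ∧
          v = (∑ i, p i * (α * W (f x u i))) -
            γ * (∑ i, p0 i * (1 - p i / p0 i) ^ 2)} =
        c x u + α * (∑ i, p0 i * W (f x u i)) +
          (1 / (4 * γ)) * ((∑ i, p0 i * (α * W (f x u i)) ^ 2) -
            (∑ i, p0 i * (α * W (f x u i))) ^ 2)) ∧
    (∀ x : S,
      (⨅ u : U, (c x u +
        sSup {v : ℝ | ∃ p : Fin N → ℝ, (∀ i, 0 ≤ p i) ∧ (∑ i, p i) = 1 ∧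
          v = (∑ i, p i * (α * W (f x u i))) -
            γ * (∑ i, p0 i * (1 - p i / p0 i) ^ 2)})) =
      (⨅ u : U, (c x u + α * (∑ i, p0 i * W (f x u i)) +
          (1 / (4 * γ)) * ((∑ i, p0 i * (α * W (f x u i)) ^ 2) -
            (∑ i, p0 i * (α * W (f x u i))) ^ 2)))) := by
  have hpt : ∀ x : S, ∀ u : U, _ := fun x u =>
    (isGreatest_objective hγ hp0pos hp0sum (fun i => α * W (f x u i)) (hgap x u)).csSup_eq
  have hmean : ∀ x u, ∑ i, p0 i * (α * W (f x u i)) = α * ∑ i, p0 i * W (f x u i) := by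
    intro x u
    rw [Finset.mul_sum]
    exact Finset.sum_congr rfl fun i _ => by ring
  refine ⟨fun x u => ?_, fun x => iInf_congr fun u => ?_⟩ <;>
  · rw [hpt x u, hmean x u]
    ring
end

section
/- Theorem (solving the mean–variance-type Bellman equation via the Riccati equation, part i): suppose P* ∈ ℝ^{n×n} is a symmetric positive semidefinite solution of the Riccati equation P* = α Aᵀ P̃* A + Q − α² Aᵀ P̃* B (R + α Bᵀ P̃* B)^{−1} Bᵀ P̃* A, where P̃* := P* + (α/γ) P* Σ P*. Assume in addition that the disturbance satisfies the moment conditions Σ_j q_j ξ_j (ξ_jᵀ P* ξ_j) = 0 and Σ_j q_j (ξ_jᵀ P* ξ_j)² − (Tr(P* Σ))² = 2 Tr(P* Σ P* Σ). Define r := (α/(1−α)) Tr[P* Σ + (α/(2γ)) P* Σ P* Σ] and V(x) := xᵀ P* x + r. Then V satisfies the mean–variance-type Bellman equation: for every x ∈ ℝ^n, V(x) = inf_{u ∈ ℝ^m} [ xᵀ Q x + uᵀ R u + α E_q[V(A x + B u + ξ)] + (1/(4γ)) Var_q[α V(A x + B u + ξ)] ]. -/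
open Finset Matrix

/-!
Write `z = A x + B u`. Since `P` is symmetric,
`V (z + ξ) = (zᵀ P z + r) + 2 (P z)ᵀ ξ + ξᵀ P ξ`. The mean-zero and third-moment conditions kill the
cross terms, and the covariance and fourth-moment conditions evaluate the rest, so that
`α E[V] + (1/(4γ)) Var[α V] = α zᵀ P̃ z + α r + α Tr(P Σ) + (α²/(2γ)) Tr(P Σ P Σ)`
(`mean_variance_quadratic`); the constant `r` is exactly the one for which the last three terms
sum to `r`.

What remains is to minimise `xᵀ Q x + uᵀ R u + α zᵀ P̃ z` over `u`. Here `M = R + α Bᵀ P̃ B` is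
positive definite, and completing the square (`complete_square`) shows that this quadratic equals
`xᵀ P x`, by the Riccati equation, plus `(u + v)ᵀ M (u + v)` with `v = α M⁻¹ Bᵀ P̃ A x`. The infimum
is therefore attained at `u = -v`.
-/

theorem dotProduct_mulVec_comm_of_symm {k : ℕ} {S : Matrix (Fin k) (Fin k) ℝ} (hS : Sᵀ = S)
    (a b : Fin k → ℝ) : a ⬝ᵥ S *ᵥ b = b ⬝ᵥ S *ᵥ a := by
  rw [dotProduct_mulVec, ← mulVec_transpose, hS, dotProduct_comm]

theorem sum_weighted_dotProduct {n N : ℕ} (c : Fin N → ℝ) (ξ : Fin N → (Fin n → ℝ))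
    (h : ∑ j, c j • ξ j = 0) (a : Fin n → ℝ) : ∑ j, c j * (a ⬝ᵥ ξ j) = 0 := by
  have h' : a ⬝ᵥ ∑ j, c j • ξ j = 0 := by rw [h, dotProduct_zero]
  simpa [dotProduct_sum] using h'

theorem sum_sq_dotProduct {n N : ℕ} (q : Fin N → ℝ) (ξ : Fin N → (Fin n → ℝ)) (a : Fin n → ℝ) :
    ∑ j, q j * (a ⬝ᵥ ξ j) ^ 2 = a ⬝ᵥ (∑ j, q j • vecMulVec (ξ j) (ξ j)) *ᵥ a := by
  rw [sum_mulVec, dotProduct_sum]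
  refine Finset.sum_congr rfl fun j _ => ?_
  rw [smul_mulVec, vecMulVec_mulVec, dotProduct_smul]
  simp [dotProduct_comm (ξ j) a, sq]

theorem sum_quadratic_eq_trace {n N : ℕ} (q : Fin N → ℝ) (ξ : Fin N → (Fin n → ℝ))
    (P : Matrix (Fin n) (Fin n) ℝ) :
    ∑ j, q j * (ξ j ⬝ᵥ P *ᵥ ξ j) = (P * ∑ j, q j • vecMulVec (ξ j) (ξ j)).trace := by
  rw [Matrix.mul_sum, trace_sum]
  refine Finset.sum_congr rfl fun j _ => ?_
  rw [Matrix.mul_smul, trace_smul, mul_vecMulVec, trace_vecMulVec, dotProduct_comm, smul_eq_mul]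

/-- The mean-plus-variance functional of `α (yᵀ P y + r)` at `y = z + ξ`, evaluated under the
moment conditions on `ξ`. -/
theorem mean_variance_quadratic {n N : ℕ} (α γ : ℝ) (hγ : 0 < γ)
    (q : Fin N → ℝ) (hqsum : ∑ j, q j = 1)
    (ξ : Fin N → (Fin n → ℝ)) (hmean : ∑ j, q j • ξ j = 0)
    (C : Matrix (Fin n) (Fin n) ℝ) (hcov : ∑ j, q j • vecMulVec (ξ j) (ξ j) = C)
    (P : Matrix (Fin n) (Fin n) ℝ) (hP : Pᵀ = P)
    (hthird : ∑ j, (q j * (ξ j ⬝ᵥ P *ᵥ ξ j)) • ξ j = 0)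
    (hfourth : (∑ j, q j * (ξ j ⬝ᵥ P *ᵥ ξ j) ^ 2) - ((P * C).trace) ^ 2
      = 2 * (P * C * P * C).trace)
    (r : ℝ) (z : Fin n → ℝ) :
    α * (∑ j, q j * ((z + ξ j) ⬝ᵥ P *ᵥ (z + ξ j) + r)) +
      (1 / (4 * γ)) *
        ((∑ j, q j * (α * ((z + ξ j) ⬝ᵥ P *ᵥ (z + ξ j) + r)) ^ 2) -
          (∑ j, q j * (α * ((z + ξ j) ⬝ᵥ P *ᵥ (z + ξ j) + r))) ^ 2) =
      α * (z ⬝ᵥ (P + (α / γ) • (P * C * P)) *ᵥ z) +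
        (α * r + α * ((P * C).trace + (α / (2 * γ)) * (P * C * P * C).trace)) := by
  have h1 := sum_weighted_dotProduct q ξ hmean (P *ᵥ z)
  have h2 := sum_weighted_dotProduct _ ξ hthird (P *ᵥ z)
  have h3 := sum_sq_dotProduct q ξ (P *ᵥ z)
  have h4 := sum_quadratic_eq_trace q ξ P
  rw [hcov] at h3 h4
  have h5 : z ⬝ᵥ (P + (α / γ) • (P * C * P)) *ᵥ z =
      z ⬝ᵥ P *ᵥ z + (α / γ) * ((P *ᵥ z) ⬝ᵥ C *ᵥ (P *ᵥ z)) := by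
    have : z ⬝ᵥ (P * C * P) *ᵥ z = (P *ᵥ z) ⬝ᵥ C *ᵥ (P *ᵥ z) := by
      rw [← mulVec_mulVec, ← mulVec_mulVec, dotProduct_mulVec z P, ← mulVec_transpose, hP]
    rw [add_mulVec, smul_mulVec, dotProduct_add, dotProduct_smul, this, smul_eq_mul]
  have hexp : ∀ j, (z + ξ j) ⬝ᵥ P *ᵥ (z + ξ j) + r =
      (z ⬝ᵥ P *ᵥ z + r) + 2 * ((P *ᵥ z) ⬝ᵥ ξ j) + ξ j ⬝ᵥ P *ᵥ ξ j := by
    intro j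
    rw [mulVec_add, add_dotProduct, dotProduct_add, dotProduct_add,
      dotProduct_mulVec_comm_of_symm hP z (ξ j), dotProduct_comm (P *ᵥ z)]
    ring
  rw [h5]
  simp only [hexp]
  generalize (P * C * P * C).trace = T2 at *
  generalize (P * C).trace = T at *
  generalize z ⬝ᵥ P *ᵥ z = k at *
  generalize (P *ᵥ z) ⬝ᵥ C *ᵥ (P *ᵥ z) = W at *
  generalize hl : (fun j => (P *ᵥ z) ⬝ᵥ ξ j) = l at *
  generalize hs : (fun j => ξ j ⬝ᵥ P *ᵥ ξ j) = s at *
  have hl' : ∀ j, (P *ᵥ z) ⬝ᵥ ξ j = l j := fun j => congrFun hl j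
  have hs' : ∀ j, ξ j ⬝ᵥ P *ᵥ ξ j = s j := fun j => congrFun hs j
  simp only [hl', hs'] at *
  have hE : ∑ j, q j * (k + r + 2 * l j + s j) = k + r + T := by
    have : ∀ j, q j * (k + r + 2 * l j + s j) =
        (k + r) * q j + 2 * (q j * l j) + q j * s j := fun j => by ring
    simp only [this, Finset.sum_add_distrib, ← Finset.mul_sum]
    rw [h1, h4, hqsum]; ring
  have hE' : ∑ j, q j * (α * (k + r + 2 * l j + s j)) = α * (k + r + T) := by
    rw [← hE, Finset.mul_sum]
    exact Finset.sum_congr rfl fun j _ => by ring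
  have hE2 : ∑ j, q j * (α * (k + r + 2 * l j + s j)) ^ 2 =
      α ^ 2 * ((k + r) ^ 2 + 4 * W + (2 * T2 + T ^ 2) + 2 * (k + r) * T) := by
    have : ∀ j, q j * (α * (k + r + 2 * l j + s j)) ^ 2 =
        α ^ 2 * ((k + r) ^ 2 * q j + 4 * (q j * l j ^ 2) + q j * s j ^ 2
          + 4 * (k + r) * (q j * l j) + 4 * (q j * s j * l j) + 2 * (k + r) * (q j * s j)) :=
      fun j => by ring
    simp only [this, Finset.sum_add_distrib, ← Finset.mul_sum]
    rw [h1, h2, h3, h4, hqsum, show ∑ j, q j * s j ^ 2 = 2 * T2 + T ^ 2 by linarith]; ring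
  rw [hE, hE', hE2]
  field_simp
  ring

/-- Completing the square in the control variable `u`, with `M` the Hessian (up to a factor `2`)
of the stage cost. -/
theorem complete_square {n m : ℕ}
    (A : Matrix (Fin n) (Fin n) ℝ) (B : Matrix (Fin n) (Fin m) ℝ)
    (Q S : Matrix (Fin n) (Fin n) ℝ) (hS : Sᵀ = S) (R M : Matrix (Fin m) (Fin m) ℝ)
    (α : ℝ) (hM : M = R + α • (Bᵀ * S * B)) (hMs : Mᵀ = M) (hMu : IsUnit M.det)
    (x : Fin n → ℝ) (u : Fin m → ℝ) :
    x ⬝ᵥ Q *ᵥ x + u ⬝ᵥ R *ᵥ u + α * ((A *ᵥ x + B *ᵥ u) ⬝ᵥ S *ᵥ (A *ᵥ x + B *ᵥ u)) =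
      x ⬝ᵥ (α • (Aᵀ * S * A) + Q - (α ^ 2) • (Aᵀ * S * B * M⁻¹ * (Bᵀ * S * A))) *ᵥ x +
        (u + α • M⁻¹ *ᵥ (Bᵀ * S * A) *ᵥ x) ⬝ᵥ M *ᵥ (u + α • M⁻¹ *ᵥ (Bᵀ * S * A) *ᵥ x) := by
  have hMM : M *ᵥ (M⁻¹ *ᵥ (Bᵀ * S * A) *ᵥ x) = (Bᵀ * S * A) *ᵥ x := by
    rw [mulVec_mulVec, mul_nonsing_inv _ hMu, one_mulVec]
  -- pull a left factor `Dᵀ` across the dot product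
  have hT : ∀ {k l : ℕ} (D : Matrix (Fin k) (Fin l) ℝ) (a : Fin l → ℝ) (b : Fin k → ℝ),
      a ⬝ᵥ Dᵀ *ᵥ b = (D *ᵥ a) ⬝ᵥ b := by
    intro k l D a b
    rw [mulVec_transpose, dotProduct_comm, ← dotProduct_mulVec, dotProduct_comm]
  have hW : ∀ b : Fin m → ℝ, x ⬝ᵥ (Aᵀ * S * B) *ᵥ b = b ⬝ᵥ (Bᵀ * S * A) *ᵥ x := by
    intro b
    rw [← mulVec_mulVec, ← mulVec_mulVec, ← mulVec_mulVec, ← mulVec_mulVec, hT, hT,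
      dotProduct_mulVec_comm_of_symm hS]
  have hxx : x ⬝ᵥ (Aᵀ * S * A) *ᵥ x = (A *ᵥ x) ⬝ᵥ S *ᵥ (A *ᵥ x) := by
    rw [← mulVec_mulVec, ← mulVec_mulVec, hT]
  have huu : u ⬝ᵥ (Bᵀ * S * B) *ᵥ u = (B *ᵥ u) ⬝ᵥ S *ᵥ (B *ᵥ u) := by
    rw [← mulVec_mulVec, ← mulVec_mulVec, hT]
  have hux : u ⬝ᵥ (Bᵀ * S * A) *ᵥ x = (B *ᵥ u) ⬝ᵥ S *ᵥ (A *ᵥ x) := by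
    rw [← mulVec_mulVec, ← mulVec_mulVec, hT]
  have hMuu : u ⬝ᵥ M *ᵥ u = u ⬝ᵥ R *ᵥ u + α * ((B *ᵥ u) ⬝ᵥ S *ᵥ (B *ᵥ u)) := by
    rw [hM, add_mulVec, dotProduct_add, smul_mulVec, dotProduct_smul, huu, smul_eq_mul]
  have hquad : x ⬝ᵥ (Aᵀ * S * B * M⁻¹ * (Bᵀ * S * A)) *ᵥ x =
      (M⁻¹ *ᵥ (Bᵀ * S * A) *ᵥ x) ⬝ᵥ (Bᵀ * S * A) *ᵥ x := by
    rw [← mulVec_mulVec, ← mulVec_mulVec, hW]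
  have hcross := dotProduct_mulVec_comm_of_symm hMs (M⁻¹ *ᵥ (Bᵀ * S * A) *ᵥ x) u
  rw [hMM] at hcross
  have hS1 := dotProduct_mulVec_comm_of_symm hS (A *ᵥ x) (B *ᵥ u)
  simp only [sub_mulVec, add_mulVec, smul_mulVec, mulVec_add, mulVec_smul, dotProduct_add,
    dotProduct_sub, add_dotProduct, dotProduct_smul, smul_dotProduct, smul_eq_mul, hMM, hxx,
    hMuu, hux, hquad, hcross, hS1]
  ring

/-- If `P*` is a symmetric positive semidefinite solution of the
Riccati equation (with `P̃* = P* + (α/γ) P* Cov P*`), and the disturbance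
satisfies the stated third- and fourth-moment conditions, then
`V(x) = xᵀ P* x + r`, with `r = (α/(1-α)) Tr[P* Cov + (α/(2γ)) P* Cov P* Cov]`,
satisfies the mean–variance-type Bellman equation. -/
theorem riccati_solves_mean_variance_bellman
    (n m N : ℕ) (hn : 1 ≤ n) (hm : 1 ≤ m)
    (A : Matrix (Fin n) (Fin n) ℝ) (B : Matrix (Fin n) (Fin m) ℝ)
    (Q : Matrix (Fin n) (Fin n) ℝ) (hQ : Q.PosDef)
    (R : Matrix (Fin m) (Fin m) ℝ) (hR : R.PosDef)
    (α : ℝ) (hα : 0 < α) (hα1 : α < 1) (γ : ℝ) (hγ : 0 < γ)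
    (q : Fin N → ℝ) (hq : ∀ j, 0 ≤ q j) (hqsum : ∑ j, q j = 1)
    (ξ : Fin N → (Fin n → ℝ)) (hmean : ∑ j, q j • ξ j = 0)
    (Cov : Matrix (Fin n) (Fin n) ℝ)
    (hcov : ∑ j, q j • Matrix.vecMulVec (ξ j) (ξ j) = Cov)
    (Pstar : Matrix (Fin n) (Fin n) ℝ) (hPstar : Pstar.PosSemidef)
    (Pt : Matrix (Fin n) (Fin n) ℝ)
    (hPt : Pt = Pstar + (α / γ) • (Pstar * Cov * Pstar))
    (hriccati : Pstar = α • (Aᵀ * Pt * A) + Q -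
      (α ^ 2) • (Aᵀ * Pt * B * (R + α • (Bᵀ * Pt * B))⁻¹ * (Bᵀ * Pt * A)))
    (hthird : ∑ j, (q j * (ξ j ⬝ᵥ Pstar.mulVec (ξ j))) • ξ j = 0)
    (hfourth : (∑ j, q j * (ξ j ⬝ᵥ Pstar.mulVec (ξ j)) ^ 2) -
      ((Pstar * Cov).trace) ^ 2 = 2 * (Pstar * Cov * Pstar * Cov).trace)
    (r : ℝ)
    (hr : r = (α / (1 - α)) *
      ((Pstar * Cov).trace + (α / (2 * γ)) * (Pstar * Cov * Pstar * Cov).trace))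
    (V : (Fin n → ℝ) → ℝ)
    (hV : V = fun y => y ⬝ᵥ Pstar.mulVec y + r) :
    ∀ x : Fin n → ℝ,
      V x = ⨅ u : Fin m → ℝ,
        (x ⬝ᵥ Q.mulVec x + u ⬝ᵥ R.mulVec u +
          α * (∑ j, q j * V (A.mulVec x + B.mulVec u + ξ j)) +
          (1 / (4 * γ)) *
            ((∑ j, q j * (α * V (A.mulVec x + B.mulVec u + ξ j)) ^ 2) -
              (∑ j, q j * (α * V (A.mulVec x + B.mulVec u + ξ j))) ^ 2)) := by
  have hPs : Pstarᵀ = Pstar := by simpa using hPstar.isHermitian.eq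
  have hCov : Cov.PosSemidef := by
    rw [← hcov]
    refine Matrix.posSemidef_sum _ fun j _ => ?_
    have := (Matrix.posSemidef_vecMulVec_self_star (ξ j)).smul (hq j)
    simpa using this
  have hPtpsd : Pt.PosSemidef := by
    rw [hPt]
    refine hPstar.add (Matrix.PosSemidef.smul ?_ (by positivity))
    simpa [hPs] using hCov.mul_mul_conjTranspose_same Pstar
  have hPts : Ptᵀ = Pt := by simpa using hPtpsd.isHermitian.eq
  obtain ⟨M, hM⟩ : ∃ M, M = R + α • (Bᵀ * Pt * B) := ⟨_, rfl⟩
  have hMpd : M.PosDef := by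
    rw [hM]
    refine hR.add_posSemidef (Matrix.PosSemidef.smul ?_ hα.le)
    simpa using hPtpsd.conjTranspose_mul_mul_same B
  have hMs : Mᵀ = M := by simpa using hMpd.isHermitian.eq
  have hMu : IsUnit M.det := hMpd.det_pos.ne'.isUnit
  rw [← hM] at hriccati
  -- the defining property of the constant `r`
  have hr' : α * r + α * ((Pstar * Cov).trace +
      (α / (2 * γ)) * (Pstar * Cov * Pstar * Cov).trace) = r := by
    have h1α : (1 - α) ≠ 0 := by linarith
    have : (1 - α) * r = α * ((Pstar * Cov).trace +
        (α / (2 * γ)) * (Pstar * Cov * Pstar * Cov).trace) := by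
      rw [hr, ← mul_assoc, mul_div_cancel₀ _ h1α]
    linarith
  intro x
  have key : ∀ u : Fin m → ℝ,
      (x ⬝ᵥ Q.mulVec x + u ⬝ᵥ R.mulVec u +
          α * (∑ j, q j * V (A.mulVec x + B.mulVec u + ξ j)) +
          (1 / (4 * γ)) *
            ((∑ j, q j * (α * V (A.mulVec x + B.mulVec u + ξ j)) ^ 2) -
              (∑ j, q j * (α * V (A.mulVec x + B.mulVec u + ξ j))) ^ 2)) =
      V x + (u + α • M⁻¹ *ᵥ (Bᵀ * Pt * A) *ᵥ x) ⬝ᵥ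
        M *ᵥ (u + α • M⁻¹ *ᵥ (Bᵀ * Pt * A) *ᵥ x) := by
    intro u
    have hmv := mean_variance_quadratic α γ hγ q hqsum ξ hmean Cov hcov Pstar hPs hthird hfourth
      r (A *ᵥ x + B *ᵥ u)
    have hsq := complete_square A B Q Pt hPts R M α hM hMs hMu x u
    rw [← hPt, hr'] at hmv
    rw [← hriccati] at hsq
    simp only [hV]
    linarith
  simp only [key]
  have hnonneg : ∀ w : Fin m → ℝ, 0 ≤ w ⬝ᵥ M *ᵥ w := fun w => by
    simpa using hMpd.posSemidef.dotProduct_mulVec_nonneg w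
  refine le_antisymm (le_ciInf fun u => le_add_of_nonneg_right (hnonneg _)) ?_
  -- the infimum is attained at the Riccati feedback control
  refine (ciInf_le ⟨V x, ?_⟩ (-(α • M⁻¹ *ᵥ (Bᵀ * Pt * A) *ᵥ x))).trans (le_of_eq ?_)
  · rintro _ ⟨u, rfl⟩
    exact le_add_of_nonneg_right (hnonneg _)
  · simp
end

section
/- Theorem (solving the mean–variance-type Bellman equation via the Riccati equation, part ii): under the same hypotheses (P* symmetric positive semidefinite solving the Riccati equation P* = α Aᵀ P̃* A + Q − α² Aᵀ P̃* B (R + α Bᵀ P̃* B)^{−1} Bᵀ P̃* A with P̃* := P* + (α/γ) P* Σ P*, and the disturbance moment conditions Σ_j q_j ξ_j (ξ_jᵀ P* ξ_j) = 0 and Σ_j q_j (ξ_jᵀ P* ξ_j)² − (Tr(P* Σ))² = 2 Tr(P* Σ P* Σ)), for every x ∈ ℝ^n the map u ↦ xᵀ Q x + uᵀ R u + α E_q[V(A x + B u + ξ)] + (1/(4γ)) Var_q[α V(A x + B u + ξ)], where V(x) = xᵀ P* x + r and r = (α/(1−α)) Tr[P* Σ + (α/(2γ)) P* Σ P* Σ],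 attains its minimum at the unique point u*(x) = −(R + α Bᵀ P̃* B)^{−1} α Bᵀ P̃* A x. -/
/-!
Put `z = A x + B u`. By symmetry of `P`, `V (z + ξ) = V z + 2 (z ⬝ P ξ) + ξ ⬝ P ξ`. The linear
term has mean zero, and the third-moment condition makes it uncorrelated with `ξ ⬝ P ξ`, so the
mean contributes `z ⬝ P z` and the variance contributes `4 α² (z ⬝ P Σ P z)`, up to terms independent
of `u` (`bellman_eq_quadratic`). Hence, up to a constant, the Bellman right-hand side is
`u ⬝ R u + α (z ⬝ P̃ z)`. This is a quadratic function of `u` with positive definite Hessian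
`2 (R + α Bᵀ P̃ B)`, and the stated `u*` is its critical point; completing the square
(`quadratic_complete_square`) yields the minimality and the uniqueness.
-/

open Finset Matrix

theorem dotProduct_mulVec_symm {n : ℕ} {P : Matrix (Fin n) (Fin n) ℝ} (hP : Pᵀ = P)
    (v w : Fin n → ℝ) : v ⬝ᵥ P *ᵥ w = w ⬝ᵥ P *ᵥ v := by
  rw [dotProduct_mulVec, ← mulVec_transpose, hP, dotProduct_comm]

theorem quadratic_add {n : ℕ} {P : Matrix (Fin n) (Fin n) ℝ} (hP : Pᵀ = P)
    (v w : Fin n → ℝ) :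
    (v + w) ⬝ᵥ P *ᵥ (v + w) = v ⬝ᵥ P *ᵥ v + 2 * (v ⬝ᵥ P *ᵥ w) + w ⬝ᵥ P *ᵥ w := by
  simp only [mulVec_add, add_dotProduct, dotProduct_add]
  rw [dotProduct_mulVec_symm hP w v]
  ring

theorem cov_posSemidef {n N : ℕ} {q : Fin N → ℝ} (hq : ∀ j, 0 ≤ q j) (ξ : Fin N → (Fin n → ℝ)) :
    (∑ j, q j • vecMulVec (ξ j) (ξ j)).PosSemidef := by
  refine posSemidef_sum _ fun j _ => PosSemidef.smul ?_ (hq j)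
  simpa using posSemidef_vecMulVec_self_star (ξ j)

/-- The second moment of the scalar `w ⬝ ξ` is the quadratic form of the covariance at `w`. -/
theorem sum_dotProduct_sq {n N : ℕ} (q : Fin N → ℝ) (ξ : Fin N → (Fin n → ℝ)) (w : Fin n → ℝ) :
    ∑ j, q j * (w ⬝ᵥ ξ j) ^ 2 = w ⬝ᵥ (∑ j, q j • vecMulVec (ξ j) (ξ j)) *ᵥ w := by
  rw [sum_mulVec, dotProduct_sum]
  refine Finset.sum_congr rfl fun j _ => ?_
  rw [smul_mulVec, vecMulVec_mulVec, dotProduct_smul]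
  simp only [op_smul_eq_smul, dotProduct_smul, dotProduct_comm (ξ j) w, smul_eq_mul]
  ring

/-- Mean plus scaled variance of `α V (z + ξ)`: apart from a constant, only the quadratic form of
`P + (α / γ) P Σ P` at `z` remains. -/
theorem bellman_eq_quadratic {n N : ℕ} {α γ : ℝ}
    {q : Fin N → ℝ} (hqsum : ∑ j, q j = 1)
    {ξ : Fin N → (Fin n → ℝ)} (hmean : ∑ j, q j • ξ j = 0)
    {P : Matrix (Fin n) (Fin n) ℝ} (hP : Pᵀ = P)
    (hthird : ∑ j, (q j * (ξ j ⬝ᵥ P *ᵥ ξ j)) • ξ j = 0) (r : ℝ) (z : Fin n → ℝ) :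
    α * (∑ j, q j * ((z + ξ j) ⬝ᵥ P *ᵥ (z + ξ j) + r)) +
      (1 / (4 * γ)) * ((∑ j, q j * (α * ((z + ξ j) ⬝ᵥ P *ᵥ (z + ξ j) + r)) ^ 2) -
        (∑ j, q j * (α * ((z + ξ j) ⬝ᵥ P *ᵥ (z + ξ j) + r))) ^ 2) =
    α * (z ⬝ᵥ (P + (α / γ) • (P * (∑ j, q j • vecMulVec (ξ j) (ξ j)) * P)) *ᵥ z) +
      (α * (r + ∑ j, q j * (ξ j ⬝ᵥ P *ᵥ ξ j)) +
        (α ^ 2 / (4 * γ)) * ((∑ j, q j * (ξ j ⬝ᵥ P *ᵥ ξ j) ^ 2) -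
          (∑ j, q j * (ξ j ⬝ᵥ P *ᵥ ξ j)) ^ 2)) := by
  set w := P *ᵥ z with hw
  have hlin : ∀ j, z ⬝ᵥ P *ᵥ ξ j = w ⬝ᵥ ξ j := fun j => by
    rw [dotProduct_mulVec_symm hP, dotProduct_comm]
  set c : Fin N → ℝ := fun j => ξ j ⬝ᵥ P *ᵥ ξ j with hc
  set b : Fin N → ℝ := fun j => w ⬝ᵥ ξ j with hb
  have hS1 : ∑ j, q j * b j = 0 := by
    have h := congrArg (fun v => w ⬝ᵥ v) hmean
    simpa [dotProduct_sum, dotProduct_smul] using h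
  have hS2 : ∑ j, q j * c j * b j = 0 := by
    have h := congrArg (fun v => w ⬝ᵥ v) hthird
    simpa [dotProduct_sum, dotProduct_smul] using h
  have hS3 : ∑ j, q j * b j ^ 2 =
      z ⬝ᵥ (P * (∑ j, q j • vecMulVec (ξ j) (ξ j)) * P) *ᵥ z := by
    rw [hb, sum_dotProduct_sq, ← mulVec_mulVec, ← mulVec_mulVec, ← hw,
      dotProduct_mulVec z P, ← mulVec_transpose, hP]
  set a := z ⬝ᵥ P *ᵥ z + r with ha
  have hval : ∀ j, (z + ξ j) ⬝ᵥ P *ᵥ (z + ξ j) + r = a + 2 * b j + c j := fun j => by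
    rw [quadratic_add hP, hlin]
    ring
  simp only [hval]
  have hM : ∑ j, q j * (a + 2 * b j + c j) = a + ∑ j, q j * c j := by
    have : ∀ j, q j * (a + 2 * b j + c j) = a * q j + 2 * (q j * b j) + q j * c j :=
      fun j => by ring
    simp only [this, Finset.sum_add_distrib, ← Finset.mul_sum, hqsum, hS1]
    ring
  have hM' : ∑ j, q j * (α * (a + 2 * b j + c j)) = α * (a + ∑ j, q j * c j) := by
    rw [← hM, Finset.mul_sum]
    exact Finset.sum_congr rfl fun j _ => by ring
  have hM2 : ∑ j, q j * (α * (a + 2 * b j + c j)) ^ 2 =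
      α ^ 2 * (a ^ 2 + 4 * (∑ j, q j * b j ^ 2) + (∑ j, q j * c j ^ 2)
        + 2 * a * ∑ j, q j * c j) := by
    have : ∀ j, q j * (α * (a + 2 * b j + c j)) ^ 2 = α ^ 2 * (a ^ 2 * q j + 4 * (q j * b j ^ 2)
        + q j * c j ^ 2 + 2 * a * (q j * c j) + 4 * a * (q j * b j) + 4 * (q j * c j * b j)) :=
      fun j => by ring
    simp only [this, Finset.sum_add_distrib, ← Finset.mul_sum, hqsum, hS1, hS2]
    ring
  rw [hM, hM', hM2, hS3, add_mulVec, smul_mulVec, dotProduct_add, dotProduct_smul, ← hw,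
    smul_eq_mul, ha]
  ring

/-- Completing the square around a critical point `v` of `u ↦ u ⬝ R u + α (y + B u) ⬝ S (y + B u)`. -/
theorem quadratic_complete_square {n m : ℕ} {R : Matrix (Fin m) (Fin m) ℝ} (hR : Rᵀ = R)
    {S : Matrix (Fin n) (Fin n) ℝ} (hS : Sᵀ = S) (B : Matrix (Fin n) (Fin m) ℝ) (α : ℝ)
    (y : Fin n → ℝ) (v : Fin m → ℝ)
    (hv : (R + α • (Bᵀ * S * B)) *ᵥ v = -(α • (Bᵀ * S) *ᵥ y)) (u : Fin m → ℝ) :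
    u ⬝ᵥ R *ᵥ u + α * ((y + B *ᵥ u) ⬝ᵥ S *ᵥ (y + B *ᵥ u)) =
      v ⬝ᵥ R *ᵥ v + α * ((y + B *ᵥ v) ⬝ᵥ S *ᵥ (y + B *ᵥ v)) +
        (u - v) ⬝ᵥ (R + α • (Bᵀ * S * B)) *ᵥ (u - v) := by
  obtain ⟨d, rfl⟩ : ∃ d, u = v + d := ⟨u - v, by abel⟩
  have hpull : ∀ t : Fin n → ℝ, d ⬝ᵥ (Bᵀ * S) *ᵥ t = (B *ᵥ d) ⬝ᵥ S *ᵥ t := fun t => by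
    rw [← mulVec_mulVec, dotProduct_mulVec, vecMul_transpose]
  have hM : ∀ t : Fin m → ℝ, d ⬝ᵥ (R + α • (Bᵀ * S * B)) *ᵥ t =
      d ⬝ᵥ R *ᵥ t + α * ((B *ᵥ d) ⬝ᵥ S *ᵥ (B *ᵥ t)) := fun t => by
    rw [add_mulVec, smul_mulVec, dotProduct_add, dotProduct_smul, ← mulVec_mulVec, hpull,
      smul_eq_mul]
  have hcrit := congrArg (fun t => d ⬝ᵥ t) hv
  simp only [hM, dotProduct_neg, dotProduct_smul, hpull, smul_eq_mul] at hcrit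
  have hz : y + B *ᵥ (v + d) = (y + B *ᵥ v) + B *ᵥ d := by
    rw [mulVec_add, add_assoc]
  rw [hz, add_sub_cancel_left, hM, quadratic_add hR, quadratic_add hS (y + B *ᵥ v),
    dotProduct_mulVec_symm hR v d, dotProduct_mulVec_symm hS (y + B *ᵥ v) (B *ᵥ d), mulVec_add,
    dotProduct_add (B *ᵥ d) (S *ᵥ y)]
  linear_combination 2 * hcrit

/-- Under the hypotheses of the Riccati theorem (Pstar symmetric
positive semidefinite solving the Riccati equation, disturbance moment
conditions), for every `x` the mean–variance Bellman right-hand side, as a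
function of the control `u`, attains its minimum at the unique point
`u*(x) = -(R + α Bᵀ P̃* B)⁻¹ α Bᵀ P̃* A x`. -/
theorem riccati_bellman_unique_minimizer
    (n m N : ℕ) (hn : 1 ≤ n) (hm : 1 ≤ m)
    (A : Matrix (Fin n) (Fin n) ℝ) (B : Matrix (Fin n) (Fin m) ℝ)
    (Q : Matrix (Fin n) (Fin n) ℝ) (hQ : Q.PosDef)
    (R : Matrix (Fin m) (Fin m) ℝ) (hR : R.PosDef)
    (α : ℝ) (hα : 0 < α) (hα1 : α < 1) (γ : ℝ) (hγ : 0 < γ)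
    (q : Fin N → ℝ) (hq : ∀ j, 0 ≤ q j) (hqsum : ∑ j, q j = 1)
    (ξ : Fin N → (Fin n → ℝ)) (hmean : ∑ j, q j • ξ j = 0)
    (Cov : Matrix (Fin n) (Fin n) ℝ)
    (hcov : ∑ j, q j • Matrix.vecMulVec (ξ j) (ξ j) = Cov)
    (Pstar : Matrix (Fin n) (Fin n) ℝ) (hPstar : Pstar.PosSemidef)
    (Pt : Matrix (Fin n) (Fin n) ℝ)
    (hPt : Pt = Pstar + (α / γ) • (Pstar * Cov * Pstar))
    (hriccati : Pstar = α • (Aᵀ * Pt * A) + Q -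
      (α ^ 2) • (Aᵀ * Pt * B * (R + α • (Bᵀ * Pt * B))⁻¹ * (Bᵀ * Pt * A)))
    (hthird : ∑ j, (q j * (ξ j ⬝ᵥ Pstar.mulVec (ξ j))) • ξ j = 0)
    (hfourth : (∑ j, q j * (ξ j ⬝ᵥ Pstar.mulVec (ξ j)) ^ 2) -
      ((Pstar * Cov).trace) ^ 2 = 2 * (Pstar * Cov * Pstar * Cov).trace)
    (r : ℝ)
    (hr : r = (α / (1 - α)) *
      ((Pstar * Cov).trace + (α / (2 * γ)) * (Pstar * Cov * Pstar * Cov).trace))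
    (V : (Fin n → ℝ) → ℝ)
    (hV : V = fun y => y ⬝ᵥ Pstar.mulVec y + r)
    (x : Fin n → ℝ)
    (ustar : Fin m → ℝ)
    (hustar : ustar = -(((R + α • (Bᵀ * Pt * B))⁻¹ * (α • (Bᵀ * Pt * A))).mulVec x)) :
    (∀ u : Fin m → ℝ,
      x ⬝ᵥ Q.mulVec x + ustar ⬝ᵥ R.mulVec ustar +
          α * (∑ j, q j * V (A.mulVec x + B.mulVec ustar + ξ j)) +
          (1 / (4 * γ)) *
            ((∑ j, q j * (α * V (A.mulVec x + B.mulVec ustar + ξ j)) ^ 2) -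
              (∑ j, q j * (α * V (A.mulVec x + B.mulVec ustar + ξ j))) ^ 2) ≤
        x ⬝ᵥ Q.mulVec x + u ⬝ᵥ R.mulVec u +
          α * (∑ j, q j * V (A.mulVec x + B.mulVec u + ξ j)) +
          (1 / (4 * γ)) *
            ((∑ j, q j * (α * V (A.mulVec x + B.mulVec u + ξ j)) ^ 2) -
              (∑ j, q j * (α * V (A.mulVec x + B.mulVec u + ξ j))) ^ 2)) ∧
    (∀ u : Fin m → ℝ, u ≠ ustar →
      x ⬝ᵥ Q.mulVec x + ustar ⬝ᵥ R.mulVec ustar +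
          α * (∑ j, q j * V (A.mulVec x + B.mulVec ustar + ξ j)) +
          (1 / (4 * γ)) *
            ((∑ j, q j * (α * V (A.mulVec x + B.mulVec ustar + ξ j)) ^ 2) -
              (∑ j, q j * (α * V (A.mulVec x + B.mulVec ustar + ξ j))) ^ 2) <
        x ⬝ᵥ Q.mulVec x + u ⬝ᵥ R.mulVec u +
          α * (∑ j, q j * V (A.mulVec x + B.mulVec u + ξ j)) +
          (1 / (4 * γ)) *
            ((∑ j, q j * (α * V (A.mulVec x + B.mulVec u + ξ j)) ^ 2) -
              (∑ j, q j * (α * V (A.mulVec x + B.mulVec u + ξ j))) ^ 2)) := by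
  have hPT : Pstarᵀ = Pstar := by simpa using hPstar.isHermitian.eq
  have hRT : Rᵀ = R := by simpa using hR.isHermitian.eq
  have hPtPSD : Pt.PosSemidef := by
    have hC := hcov ▸ cov_posSemidef hq ξ
    have h := hC.conjTranspose_mul_mul_same Pstar
    rw [hPstar.isHermitian.eq] at h
    rw [hPt]
    exact hPstar.add (h.smul (by positivity))
  have hPtT : Ptᵀ = Pt := by simpa using hPtPSD.isHermitian.eq
  have hM : (R + α • (Bᵀ * Pt * B)).PosDef := by
    have h := hPtPSD.conjTranspose_mul_mul_same B
    rw [conjTranspose_eq_transpose_of_trivial] at h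
    exact hR.add_posSemidef (h.smul hα.le)
  have hcrit : (R + α • (Bᵀ * Pt * B)) *ᵥ ustar = -(α • (Bᵀ * Pt) *ᵥ (A *ᵥ x)) := by
    have hdet := (isUnit_iff_isUnit_det _).mp hM.isUnit
    rw [hustar, mulVec_neg, mulVec_mulVec, ← Matrix.mul_assoc, mul_nonsing_inv _ hdet,
      Matrix.one_mul, smul_mulVec, mulVec_mulVec]
  have hobj := fun u : Fin m → ℝ => bellman_eq_quadratic (α := α) (γ := γ) hqsum hmean hPT hthird r
    (A *ᵥ x + B *ᵥ u)
  rw [hcov, ← hPt] at hobj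
  have hsq := quadratic_complete_square hRT hPtT B α (A *ᵥ x) ustar hcrit
  subst hV
  constructor
  · intro u
    have hnn := hM.posSemidef.dotProduct_mulVec_nonneg (u - ustar)
    rw [star_trivial] at hnn
    linarith [hobj u, hobj ustar, hsq u]
  · intro u hu
    have hpos := hM.dotProduct_mulVec_pos (sub_ne_zero.mpr hu)
    rw [star_trivial] at hpos
    linarith [hobj u, hobj ustar, hsq u]
end

section
/- Value function of a fixed linear controller via a Lyapunov-type equation: let K ∈ ℝ^{m×n} and suppose Y ∈ ℝ^{n×n} is a symmetric positive semidefinite solution of Y = α (A − B K)ᵀ Ỹ (A − B K) + Q + Kᵀ R K, where Ỹ := Y + (α/γ) Y Σ Y. Assume the disturbance satisfies the moment conditions Σ_j q_j ξ_j (ξ_jᵀ Y ξ_j) = 0 and Σ_j q_j (ξ_jᵀ Y ξ_j)² − (Tr(Y Σ))² = 2 Tr(Y Σ Y Σ). Define r_Y := (α/(1−α)) Tr[Y Σ + (α/(2γ)) Y Σ Y Σ] and X(x) := xᵀ Y x + r_Y. Then for every x ∈ ℝ^n, X(x) = xᵀ Q x + (K x)ᵀ R (K x) + α E_q[X((A −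 B K) x + ξ)] + (1/(4γ)) Var_q[α X((A − B K) x + ξ)]; that is, X satisfies the mean–variance-type Bellman recursion with the control fixed at u = −K x. -/
/-!
Write `z = (A - B K) x` and `w = Y z`. By symmetry of `Y`, the next-stage value is
`X (z + ξ) = c + 2 b + s` with `c = zᵀ Y z + r_Y` constant, `b = wᵀ ξ` linear and
`s = ξᵀ Y ξ` quadratic in the disturbance. The moment hypotheses say that `E b = 0`,
`E s = Tr (Y Σ)`, `E b² = wᵀ Σ w`, `E (b s) = 0` and `Var s = 2 Tr (Y Σ Y Σ)`, so the
mean is `c + Tr (Y Σ)` and the variance is `4 wᵀ Σ w + 2 Tr (Y Σ Y Σ)`. The term `wᵀ Σ w`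
is the quadratic form of `Y Σ Y` at `z`, so the Lyapunov equation accounts for everything
that depends on `x`, and the definition of `r_Y` matches the constants.
-/

open Finset Matrix

lemma sum_weighted_affine {N : ℕ} (q b s : Fin N → ℝ) (c T : ℝ)
    (h0 : ∑ j, q j = 1) (hb : ∑ j, q j * b j = 0) (hs : ∑ j, q j * s j = T) :
    ∑ j, q j * (c + 2 * b j + s j) = c + T := by
  have h : ∑ j, q j * (c + 2 * b j + s j)
      = c * ∑ j, q j + 2 * ∑ j, q j * b j + ∑ j, q j * s j := by
    simp only [Finset.mul_sum, ← Finset.sum_add_distrib]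
    exact Finset.sum_congr rfl fun j _ => by ring
  rw [h, h0, hb, hs]; ring

lemma sum_weighted_affine_sq {N : ℕ} (q b s : Fin N → ℝ) (c T V F : ℝ)
    (h0 : ∑ j, q j = 1) (hb : ∑ j, q j * b j = 0) (hs : ∑ j, q j * s j = T)
    (hbb : ∑ j, q j * b j ^ 2 = V) (hbs : ∑ j, q j * s j * b j = 0)
    (hss : ∑ j, q j * s j ^ 2 = F) :
    ∑ j, q j * (c + 2 * b j + s j) ^ 2 = c ^ 2 + 2 * c * T + 4 * V + F := by
  have h : ∑ j, q j * (c + 2 * b j + s j) ^ 2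
      = c ^ 2 * ∑ j, q j + 4 * c * ∑ j, q j * b j + 2 * c * ∑ j, q j * s j
        + 4 * ∑ j, q j * b j ^ 2 + 4 * ∑ j, q j * s j * b j + ∑ j, q j * s j ^ 2 := by
    simp only [Finset.mul_sum, ← Finset.sum_add_distrib]
    exact Finset.sum_congr rfl fun j _ => by ring
  rw [h, h0, hb, hs, hbb, hbs, hss]; ring

lemma dotProduct_mulVec_add_self {n : ℕ} {Y : Matrix (Fin n) (Fin n) ℝ} (hY : Yᵀ = Y)
    (z v : Fin n → ℝ) :
    (z + v) ⬝ᵥ Y *ᵥ (z + v) = z ⬝ᵥ Y *ᵥ z + 2 * (Y *ᵥ z ⬝ᵥ v) + v ⬝ᵥ Y *ᵥ v := by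
  have h : z ⬝ᵥ Y *ᵥ v = Y *ᵥ z ⬝ᵥ v := by
    rw [dotProduct_mulVec, ← mulVec_transpose, hY]
  rw [mulVec_add, dotProduct_add, add_dotProduct, add_dotProduct, h,
    dotProduct_comm v (Y *ᵥ z)]
  ring

lemma dotProduct_transpose_mul_mul_mulVec {k n : ℕ} (M : Matrix (Fin k) (Fin n) ℝ)
    (S : Matrix (Fin k) (Fin k) ℝ) (x : Fin n → ℝ) :
    x ⬝ᵥ (Mᵀ * S * M) *ᵥ x = M *ᵥ x ⬝ᵥ S *ᵥ (M *ᵥ x) := by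
  rw [← mulVec_mulVec, ← mulVec_mulVec, dotProduct_mulVec, vecMul_transpose]

/-- Value function of a fixed linear controller `u = -K x` via a
Lyapunov-type equation: if `Y` is a symmetric positive semidefinite solution of
`Y = α (A - B K)ᵀ Ỹ (A - B K) + Q + Kᵀ R K` with `Ỹ = Y + (α/γ) Y Cov Y`, and
the disturbance satisfies the stated moment conditions, then
`X(x) = xᵀ Y x + r_Y` satisfies the mean–variance-type Bellman recursion with
the control fixed at `u = -K x`. -/
theorem lyapunov_value_function_fixed_controller
    (n m N : ℕ) (hn : 1 ≤ n) (hm : 1 ≤ m)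
    (A : Matrix (Fin n) (Fin n) ℝ) (B : Matrix (Fin n) (Fin m) ℝ)
    (Q : Matrix (Fin n) (Fin n) ℝ) (hQ : Q.PosDef)
    (R : Matrix (Fin m) (Fin m) ℝ) (hR : R.PosDef)
    (α : ℝ) (hα : 0 < α) (hα1 : α < 1) (γ : ℝ) (hγ : 0 < γ)
    (q : Fin N → ℝ) (hq : ∀ j, 0 ≤ q j) (hqsum : ∑ j, q j = 1)
    (ξ : Fin N → (Fin n → ℝ)) (hmean : ∑ j, q j • ξ j = 0)
    (Cov : Matrix (Fin n) (Fin n) ℝ)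
    (hcov : ∑ j, q j • Matrix.vecMulVec (ξ j) (ξ j) = Cov)
    (K : Matrix (Fin m) (Fin n) ℝ)
    (Y : Matrix (Fin n) (Fin n) ℝ) (hY : Y.PosSemidef)
    (Yt : Matrix (Fin n) (Fin n) ℝ)
    (hYt : Yt = Y + (α / γ) • (Y * Cov * Y))
    (hlyap : Y = α • ((A - B * K)ᵀ * Yt * (A - B * K)) + Q + Kᵀ * R * K)
    (hthird : ∑ j, (q j * (ξ j ⬝ᵥ Y.mulVec (ξ j))) • ξ j = 0)
    (hfourth : (∑ j, q j * (ξ j ⬝ᵥ Y.mulVec (ξ j)) ^ 2) -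
      ((Y * Cov).trace) ^ 2 = 2 * (Y * Cov * Y * Cov).trace)
    (rY : ℝ)
    (hrY : rY = (α / (1 - α)) *
      ((Y * Cov).trace + (α / (2 * γ)) * (Y * Cov * Y * Cov).trace))
    (X : (Fin n → ℝ) → ℝ)
    (hX : X = fun y => y ⬝ᵥ Y.mulVec y + rY) :
    ∀ x : Fin n → ℝ,
      X x = x ⬝ᵥ Q.mulVec x + (K.mulVec x) ⬝ᵥ R.mulVec (K.mulVec x) +
        α * (∑ j, q j * X ((A - B * K).mulVec x + ξ j)) +
        (1 / (4 * γ)) *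
          ((∑ j, q j * (α * X ((A - B * K).mulVec x + ξ j)) ^ 2) -
            (∑ j, q j * (α * X ((A - B * K).mulVec x + ξ j))) ^ 2) := by
  intro x
  have hYs : Yᵀ = Y := by simpa using hY.isHermitian.eq
  set z := (A - B * K) *ᵥ x with hz
  set w := Y *ᵥ z with hw
  set T := (Y * Cov).trace
  set U := (Y * Cov * Y * Cov).trace
  have hb : ∑ j, q j * (w ⬝ᵥ ξ j) = 0 := by
    have h := congrArg (fun v => w ⬝ᵥ v) hmean
    simpa [dotProduct_sum, dotProduct_smul] using h
  have hbs : ∑ j, q j * (ξ j ⬝ᵥ Y *ᵥ ξ j) * (w ⬝ᵥ ξ j) = 0 := by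
    have h := congrArg (fun v => w ⬝ᵥ v) hthird
    simpa [dotProduct_sum, dotProduct_smul] using h
  have hs : ∑ j, q j * (ξ j ⬝ᵥ Y *ᵥ ξ j) = T := by
    simp only [T, ← hcov, Matrix.mul_sum, trace_sum, Matrix.mul_smul, trace_smul, smul_eq_mul,
      mul_vecMulVec, trace_vecMulVec, dotProduct_comm]
  have hbb : ∑ j, q j * (w ⬝ᵥ ξ j) ^ 2 = w ⬝ᵥ Cov *ᵥ w := by
    rw [← hcov, sum_mulVec, dotProduct_sum]
    refine Finset.sum_congr rfl fun j _ => ?_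
    rw [smul_mulVec, vecMulVec_mulVec, dotProduct_smul, op_smul_eq_smul, dotProduct_smul,
      dotProduct_comm (ξ j) w]
    simp only [smul_eq_mul]
    ring
  have hXj : ∀ j, X (z + ξ j)
      = (z ⬝ᵥ w + rY) + 2 * (w ⬝ᵥ ξ j) + ξ j ⬝ᵥ Y *ᵥ ξ j := fun j => by
    rw [hX]
    simp only [dotProduct_mulVec_add_self hYs, ← hw]
    ring
  have hE := sum_weighted_affine q (fun j => w ⬝ᵥ ξ j) (fun j => ξ j ⬝ᵥ Y *ᵥ ξ j)
    (z ⬝ᵥ w + rY) T hqsum hb hs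
  have hE2 := sum_weighted_affine_sq q (fun j => w ⬝ᵥ ξ j) (fun j => ξ j ⬝ᵥ Y *ᵥ ξ j)
    (z ⬝ᵥ w + rY) T _ _ hqsum hb hs hbb hbs (sub_eq_iff_eq_add.mp hfourth)
  have hquad : x ⬝ᵥ Y *ᵥ x = α * (z ⬝ᵥ w + (α / γ) * (w ⬝ᵥ Cov *ᵥ w))
      + x ⬝ᵥ Q *ᵥ x + K *ᵥ x ⬝ᵥ R *ᵥ (K *ᵥ x) := by
    have hYCY : z ⬝ᵥ (Y * Cov * Y) *ᵥ z = w ⬝ᵥ Cov *ᵥ w := by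
      have h := dotProduct_transpose_mul_mul_mulVec Y Cov z
      rwa [hYs] at h
    have h := congrArg (fun M => x ⬝ᵥ M *ᵥ x) hlyap
    simp only [add_mulVec, dotProduct_add, smul_mulVec, dotProduct_smul, smul_eq_mul,
      dotProduct_transpose_mul_mul_mulVec, ← hz] at h
    rw [h, hYt, add_mulVec, smul_mulVec, dotProduct_add, dotProduct_smul, hYCY, smul_eq_mul]
  have hr : rY = α * rY + α * T + α ^ 2 / (2 * γ) * U := by
    have h1 : (1 - α) ≠ 0 := by linarith
    have h : (1 - α) * rY = α * (T + α / (2 * γ) * U) := by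
      rw [hrY]; field_simp
    have h2 : α ^ 2 / (2 * γ) * U = α * (α / (2 * γ) * U) := by ring
    rw [h2]; linarith
  simp only [hXj, mul_pow, mul_left_comm (q _) _ _, ← Finset.mul_sum, hE, hE2]
  rw [hX]
  simp only [hquad]
  have hγ0 : γ ≠ 0 := ne_of_gt hγ
  -- `rY` is expanded only where it stands outside the expectation: there the fixed-point
  -- equation `hr` supplies the discounted copy and the trace terms.
  have hfin : α * (z ⬝ᵥ w + (α / γ) * (w ⬝ᵥ Cov *ᵥ w))
      + (α * rY + α * T + α ^ 2 / (2 * γ) * U)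
      = α * (z ⬝ᵥ w + rY + T) + (1 / (4 * γ)) *
        (α ^ 2 * ((z ⬝ᵥ w + rY) ^ 2 + 2 * (z ⬝ᵥ w + rY) * T + 4 * (w ⬝ᵥ Cov *ᵥ w)
          + (2 * U + T ^ 2)) - α ^ 2 * (z ⬝ᵥ w + rY + T) ^ 2) := by
    field_simp
    ring
  rw [← hr] at hfin
  linarith
end
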